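/- Assume that (𝒴,‖·‖) is separable and that (A1), (A2) and (A3) hold. Suppose either that sup_{x∈D_I} I(x) < ∞ and liminf_{n→∞} (log k(n))/n > sup_{x∈D_I} I(x), or that lim_{n→∞} (log k(n))/n = ∞. Then with probability 1, (μ_n^ω)_{n≥1} satisfies in 𝒴 the weak LDP with rate function I (the LDP upper bound holding for compact sets). If moreover (μ_n)_{n≥1} is exponentially tight, then with probability 1, (μ_n^ω)_{n≥1} satisfies in 𝒴 the full LDP with good rate function I. (Theorem 4.) -/

import Mathlib

open MeasureTheory ProbabilityTheory Filter Set Real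
open scoped ENNReal NNReal Classical Topology

/-!
Both bounds need only be proved almost surely for the countably many sets of a countable basis of
`𝒴`. For the upper bound, the mean of `μₙ^ω(B)` is `μₙ(B)` by stationarity, so Markov's inequality
and the Borel–Cantelli lemma give almost surely that `μₙ^ω(B)` grows at most as fast as `μₙ(B)`;
a finite covering extends this to compact sets.

For the lower bound, (A3) lets one replace `{SₙΦ/n ∈ B}` by an event `D` depending on `2n`
coordinates. If `p` is the probability of `D` and `N` counts its occurrences among the `k = k(n)`
blocks, the covariance of two occurrences at distance `d` is at most
`min(p, α_d) ≤ p^(1-θ) α_d^θ` up to a shift of `d`, and (A2) says exactly that all the series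
`∑ α_d^θ` converge. Chebyshev's inequality then gives
`P(N ≤ k p / 2) ≤ C / (k p^(1+θ))`. Since `k` grows faster than `1 / p`, this is exponentially small
once `θ` is small, and Borel–Cantelli yields `μₙ^ω(B') ≥ μₙ(B) / 2` eventually, for any
neighbourhood `B'` of `B` of positive width.
-/

open ExpGrowth

section LargeDeviations

lemma inv_natCast_mul_log (n : ℕ) (x : ℝ≥0∞) :
    ((n : ℝ)⁻¹ : EReal) * ENNReal.log x = ENNReal.log x / n := by
  rw [EReal.div_eq_inv_mul]
  rfl

lemma exp_coe_mul_natCast (b : ℝ) (n : ℕ) :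
    EReal.exp ((b : EReal) * n) = ENNReal.ofReal (Real.exp (b * n)) := by
  rw [← EReal.exp_coe]
  norm_cast

variable {Y : Type*} [MeasurableSpace Y] {μ ν : ℕ → Measure Y} {I : Y → ℝ≥0∞} {b : Set (Set Y)}

lemma expGrowthInf_measure_mono (ν : ℕ → Measure Y) {s t : Set Y} (h : s ⊆ t) :
    expGrowthInf (fun n => ν n s) ≤ expGrowthInf (fun n => ν n t) :=
  expGrowthInf_monotone fun _ => measure_mono h

lemma expGrowthSup_measure_mono (ν : ℕ → Measure Y) {s t : Set Y} (h : s ⊆ t) :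
    expGrowthSup (fun n => ν n s) ≤ expGrowthSup (fun n => ν n t) :=
  expGrowthSup_monotone fun _ => measure_mono h

lemma expGrowthSup_measure_union_le (ν : ℕ → Measure Y) (s t : Set Y) :
    expGrowthSup (fun n => ν n (s ∪ t)) ≤
      expGrowthSup (fun n => ν n s) ⊔ expGrowthSup (fun n => ν n t) := by
  rw [← expGrowthSup_add]
  exact expGrowthSup_monotone fun _ => measure_union_le s t

variable [TopologicalSpace Y]

/-- The large deviation principle at speed `n` with rate function `I`; lower semicontinuity of `I`
is assumed separately. -/
def SatisfiesLDP (ν : ℕ → Measure Y) (I : Y → ℝ≥0∞) : Prop :=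
  ∀ Γ : Set Y, -(⨅ x ∈ interior Γ, (I x : EReal)) ≤ expGrowthInf (fun n => ν n Γ) ∧
    expGrowthSup (fun n => ν n Γ) ≤ -(⨅ x ∈ closure Γ, (I x : EReal))

/-- The weak large deviation principle: the upper bound is required for compact sets only. -/
def SatisfiesWeakLDP (ν : ℕ → Measure Y) (I : Y → ℝ≥0∞) : Prop :=
  (∀ Γ : Set Y, -(⨅ x ∈ interior Γ, (I x : EReal)) ≤ expGrowthInf (fun n => ν n Γ)) ∧
    ∀ K : Set Y, IsCompact K → expGrowthSup (fun n => ν n K) ≤ -(⨅ x ∈ K, (I x : EReal))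

/-- Exponential tightness at speed `n`: compact sets carry all but an arbitrarily small exponential
part of the mass. -/
def ExponentiallyTight (ν : ℕ → Measure Y) : Prop :=
  ∀ α : ℝ, ∃ K : Set Y, IsCompact K ∧ expGrowthSup (fun n => ν n Kᶜ) ≤ ((-α : ℝ) : EReal)

lemma SatisfiesWeakLDP.satisfiesLDP [R1Space Y] (h : SatisfiesWeakLDP ν I)
    (ht : ExponentiallyTight ν) : SatisfiesLDP ν I := by
  refine fun Γ => ⟨h.1 Γ, EReal.le_neg_of_le_neg (le_of_forall_lt fun a ha => ?_)⟩
  obtain ⟨α, haα, hα⟩ := EReal.lt_iff_exists_real_btwn.1 ha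
  refine haα.trans_le (EReal.le_neg_of_le_neg ?_)
  obtain ⟨K, hK, hKα⟩ := ht α
  have hΓ : Γ ⊆ (closure Γ ∩ K) ∪ Kᶜ := fun x hx =>
    (em (x ∈ K)).imp (fun hxK => ⟨subset_closure hx, hxK⟩) id
  refine (expGrowthSup_measure_mono ν hΓ).trans
    ((expGrowthSup_measure_union_le ν _ _).trans (sup_le ?_ (by simpa using hKα)))
  refine (h.2 _ (hK.inter_left isClosed_closure)).trans (EReal.neg_le_neg_iff.2 ?_)
  exact hα.le.trans (le_iInf₂ fun x hx => iInf₂_le x hx.1)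

lemma SatisfiesLDP.isCompact_sublevel [T2Space Y] (h : SatisfiesLDP μ I)
    (hI : LowerSemicontinuous I) (ht : ExponentiallyTight μ) {c : ℝ≥0∞} (hc : c ≠ ⊤) :
    IsCompact {x | I x ≤ c} := by
  lift c to ℝ≥0 using hc
  obtain ⟨K, hK, hKc⟩ := ht (c + 1)
  refine hK.of_isClosed_subset (hI.isClosed_preimage _) fun x hx => by_contra fun hxK => ?_
  have hcI : (((c : ℝ) + 1 : ℝ) : EReal) ≤ I x := by
    have hK' := (h Kᶜ).1.trans (expGrowthInf_le_expGrowthSup.trans hKc)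
    rw [hK.isClosed.isOpen_compl.interior_eq, EReal.coe_neg, EReal.neg_le_neg_iff] at hK'
    exact hK'.trans (iInf₂_le x hxK)
  have hIc : (I x : EReal) ≤ (c : ℝ) := EReal.coe_ennreal_le_coe_ennreal_iff.2 hx
  exact (lt_add_one (c : ℝ)).not_ge (EReal.coe_le_coe_iff.1 (hcI.trans hIc))

lemma SatisfiesLDP.expGrowthSup_le_of_isCompact [RegularSpace Y] (h : SatisfiesLDP μ I)
    (hI : LowerSemicontinuous I) (hb : TopologicalSpace.IsTopologicalBasis b)
    (hν : ∀ B ∈ b, expGrowthSup (fun n => ν n B) ≤ expGrowthSup (fun n => μ n B))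
    {K : Set Y} (hK : IsCompact K) :
    expGrowthSup (fun n => ν n K) ≤ -(⨅ x ∈ K, (I x : EReal)) := by
  refine EReal.le_neg_of_le_neg (le_of_forall_lt fun a ha => ?_)
  obtain ⟨a', haa', ha'⟩ := exists_between ha
  refine haa'.trans_le (EReal.le_neg_of_le_neg ?_)
  have hIE : LowerSemicontinuous fun x => (I x : EReal) :=
    continuous_coe_ennreal_ereal.comp_lowerSemicontinuous hI
      fun _ _ => EReal.coe_ennreal_le_coe_ennreal_iff.2
  refine hK.induction_on (p := fun s => expGrowthSup (fun n => ν n s) ≤ -a') ?_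
    (fun s t hst ht => (expGrowthSup_measure_mono ν hst).trans ht)
    (fun s t hs ht => (expGrowthSup_measure_union_le ν s t).trans (sup_le hs ht))
    fun x hx => ?_
  · simp only [measure_empty]
    exact expGrowthSup_zero.trans_le bot_le
  · obtain ⟨B, hB, hxB, hBI⟩ :=
      hb.exists_closure_subset (hIE x a' (ha'.trans_le (iInf₂_le x hx)))
    refine ⟨B, mem_nhdsWithin_of_mem_nhds (hb.mem_nhds hB hxB), ?_⟩
    exact (hν B hB).trans ((h B).2.trans
      (EReal.neg_le_neg_iff.2 (le_iInf₂ fun y hy => (hBI hy).le)))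

end LargeDeviations

section LowerBound

variable {Y : Type*} [PseudoMetricSpace Y] {b : Set (Set Y)}

lemma exists_mem_basis_thickening_subset (hb : TopologicalSpace.IsTopologicalBasis b) {x : Y}
    {U : Set Y} (hU : U ∈ 𝓝 x) :
    ∃ B ∈ b, x ∈ B ∧ ∃ m : ℕ, Metric.thickening (1 / ((m : ℝ) + 1)) B ⊆ U := by
  obtain ⟨ε, hε, hεU⟩ := Metric.mem_nhds_iff.1 hU
  obtain ⟨m, hm⟩ := exists_nat_one_div_lt (half_pos hε)
  obtain ⟨B, hB, hxB, hBx⟩ := hb.mem_nhds_iff.1 (Metric.ball_mem_nhds x (half_pos hε))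
  refine ⟨B, hB, hxB, m, Subset.trans ?_ hεU⟩
  calc Metric.thickening (1 / ((m : ℝ) + 1)) B
      ⊆ Metric.thickening (ε / 2) (Metric.ball x (ε / 2)) :=
        (Metric.thickening_mono hm.le B).trans (Metric.thickening_subset_of_subset _ hBx)
    _ ⊆ Metric.ball x ε := by simpa only [add_halves] using Metric.thickening_ball x (ε / 2) (ε / 2)

variable [MeasurableSpace Y] {μ ν : ℕ → Measure Y} {I : Y → ℝ≥0∞}

lemma SatisfiesLDP.neg_iInf_interior_le_expGrowthInf (h : SatisfiesLDP μ I)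
    (hb : TopologicalSpace.IsTopologicalBasis b) {L : EReal}
    (hL : ∀ x, I x ≠ ⊤ → (I x : EReal) < L)
    (hν : ∀ B ∈ b, -expGrowthInf (fun n => μ n B) < L → ∀ m : ℕ,
      expGrowthInf (fun n => μ n B) ≤
        expGrowthInf (fun n => ν n (Metric.thickening (1 / ((m : ℝ) + 1)) B))) (Γ : Set Y) :
    -(⨅ x ∈ interior Γ, (I x : EReal)) ≤ expGrowthInf (fun n => ν n Γ) := by
  refine EReal.neg_le_of_neg_le (le_iInf₂ fun x hx => ?_)
  by_cases hIx : I x = ⊤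
  · simp [hIx]
  obtain ⟨B, hB, hxB, m, hm⟩ :=
    exists_mem_basis_thickening_subset hb (mem_interior_iff_mem_nhds.1 hx)
  have hBx : -expGrowthInf (fun n => μ n B) ≤ I x := by
    refine EReal.neg_le_of_neg_le (le_trans ?_ (h B).1)
    rw [(hb.isOpen hB).interior_eq, EReal.neg_le_neg_iff]
    exact iInf₂_le x hxB
  refine le_trans (EReal.neg_le_neg_iff.2 ?_) hBx
  exact (hν B hB (hBx.trans_lt (hL x hIx)) m).trans (expGrowthInf_measure_mono ν hm)

end LowerBound

section BorelCantelli

variable {Ω : Type*} [MeasurableSpace Ω] {P : Measure Ω} [IsFiniteMeasure P]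

lemma ae_eventually_notMem_of_le_exp {s : ℕ → Set Ω} {C ε : ℝ} (hε : 0 < ε)
    (h : ∀ᶠ n : ℕ in atTop, P.real (s n) ≤ C * Real.exp (-ε * n)) :
    ∀ᵐ ω ∂P, ∀ᶠ n in atTop, ω ∉ s n := by
  have hexp : Summable fun n : ℕ => C * Real.exp (-ε * n) := by
    simpa only [mul_comm] using (Real.summable_exp_nat_mul_iff.2 (neg_lt_zero.2 hε)).mul_left C
  have hs : Summable fun n => P.real (s n) := by
    refine .of_norm_bounded_eventually_nat hexp (h.mono fun n hn => ?_)
    rwa [Real.norm_of_nonneg measureReal_nonneg]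
  exact ae_eventually_notMem (by simpa using hs.tsum_ofReal_ne_top)

lemma ae_expGrowthSup_le_of_lt {f : ℕ → Ω → ℝ≥0∞} (hf : ∀ n, Measurable (f n)) {b : ℝ}
    (hb : expGrowthSup (fun n => ∫⁻ ω, f n ω ∂P) < b) :
    ∀ᵐ ω ∂P, expGrowthSup (fun n => f n ω) ≤ b := by
  obtain ⟨c, hc, hcb⟩ := EReal.lt_iff_exists_real_btwn.1 hb
  have hsmall : ∀ᶠ n : ℕ in atTop,
      P.real {ω | ENNReal.ofReal (Real.exp (b * n)) ≤ f n ω} ≤ 1 * Real.exp (-(b - c) * n) := by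
    filter_upwards [eventually_le_exp hc] with n hn
    rw [exp_coe_mul_natCast] at hn
    have hmarkov := ENNReal.toReal_mono ENNReal.ofReal_ne_top
      ((mul_meas_ge_le_lintegral (μ := P) (hf n) (ENNReal.ofReal (Real.exp (b * n)))).trans hn)
    rw [ENNReal.toReal_mul, ENNReal.toReal_ofReal (Real.exp_pos _).le,
      ENNReal.toReal_ofReal (Real.exp_pos _).le, ← le_div_iff₀' (Real.exp_pos _),
      ← Real.exp_sub] at hmarkov
    refine hmarkov.trans_eq ?_
    rw [one_mul]
    ring_nf
  have hcb' : 0 < b - c := sub_pos.2 (EReal.coe_lt_coe_iff.1 hcb)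
  filter_upwards [ae_eventually_notMem_of_le_exp hcb' hsmall] with ω hω
  refine Eventually.expGrowthSup_le (hω.mono fun n hn => ?_)
  rw [exp_coe_mul_natCast]
  exact (not_le.1 hn).le

lemma ae_expGrowthSup_le_expGrowthSup_lintegral {f : ℕ → Ω → ℝ≥0∞}
    (hf : ∀ n, Measurable (f n)) :
    ∀ᵐ ω ∂P, expGrowthSup (fun n => f n ω) ≤ expGrowthSup (fun n => ∫⁻ ω, f n ω ∂P) := by
  have hrat : ∀ᵐ ω ∂P, ∀ b : ℚ, expGrowthSup (fun n => ∫⁻ ω, f n ω ∂P) < ((b : ℝ) : EReal) →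
      expGrowthSup (fun n => f n ω) ≤ ((b : ℝ) : EReal) :=
    ae_all_iff.2 fun b => eventually_imp_distrib_left.2 (ae_expGrowthSup_le_of_lt hf)
  filter_upwards [hrat] with ω hω
  refine le_of_forall_gt fun a ha => ?_
  obtain ⟨b, hb, hba⟩ := EReal.lt_iff_exists_rat_btwn.1 ha
  exact (hω b hb).trans_lt hba

end BorelCantelli

section SecondMoment

variable {Ω : Type*} [MeasurableSpace Ω] {P : Measure Ω}

lemma sum_dist_le_two_mul_tsum {γ : ℕ → ℝ} (hγ0 : ∀ d, 0 ≤ γ d) (hγ : Summable γ)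
    (s : Finset ℕ) (i : ℕ) : ∑ j ∈ s, γ (Nat.dist i j) ≤ 2 * ∑' d, γ d := by
  have hside : ∀ t : Finset ℕ, InjOn (Nat.dist i) t →
      ∑ j ∈ t, γ (Nat.dist i j) ≤ ∑' d, γ d := fun t ht => by
    rw [← Finset.sum_image ht]
    exact hγ.sum_le_tsum _ fun d _ => hγ0 d
  rw [← Finset.sum_filter_add_sum_filter_not s (fun j => i ≤ j), two_mul]
  refine add_le_add (hside _ fun x hx y hy hxy => ?_) (hside _ fun x hx y hy hxy => ?_) <;>
  · simp only [Finset.coe_filter, mem_ofPred_eq] at hx hy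
    simp only [Nat.dist] at hxy
    omega

lemma le_rpow_one_sub_mul_rpow {x a b θ : ℝ} (hx : 0 ≤ x) (ha : x ≤ a) (hb : x ≤ b)
    (hθ0 : 0 ≤ θ) (hθ1 : θ ≤ 1) : x ≤ a ^ (1 - θ) * b ^ θ :=
  calc x = x ^ (1 - θ) * x ^ θ := by
        rw [← Real.rpow_add_of_nonneg hx (sub_nonneg.2 hθ1) hθ0, sub_add_cancel, Real.rpow_one]
    _ ≤ a ^ (1 - θ) * b ^ θ :=
        mul_le_mul (Real.rpow_le_rpow hx ha (sub_nonneg.2 hθ1)) (Real.rpow_le_rpow hx hb hθ0)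
          (Real.rpow_nonneg hx _) (Real.rpow_nonneg (hx.trans ha) _)

lemma memLp_two_indicator_one [IsFiniteMeasure P] {A : Set Ω} (hA : MeasurableSet A) :
    MemLp (A.indicator (1 : Ω → ℝ)) 2 P :=
  memLp_indicator_const 2 hA (1 : ℝ) (Or.inr (measure_ne_top _ _))

lemma measureReal_le_half_mean_le [IsFiniteMeasure P] {S : Ω → ℝ} (hS : MemLp S 2 P)
    (hmean : 0 < P[S]) :
    P.real {ω | S ω ≤ P[S] / 2} ≤ 4 * Var[S; P] / P[S] ^ 2 := by
  have hsub : {ω | S ω ≤ P[S] / 2} ⊆ {ω | P[S] / 2 ≤ |S ω - P[S]|} := fun ω hω => by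
    simp only [mem_ofPred_eq] at hω ⊢
    rw [abs_sub_comm]
    exact le_trans (by linarith) (le_abs_self _)
  have hcheb := (measure_mono hsub).trans (meas_ge_le_variance_div_sq hS (half_pos hmean))
  refine (ENNReal.toReal_le_of_le_ofReal
    (div_nonneg (variance_nonneg _ _) (sq_nonneg _)) hcheb).trans_eq ?_
  field_simp
  norm_num

variable [IsProbabilityMeasure P]

lemma covariance_indicator_one {A B : Set Ω} (hA : MeasurableSet A) (hB : MeasurableSet B) :
    cov[A.indicator (1 : Ω → ℝ), B.indicator (1 : Ω → ℝ); P] =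
      P.real (A ∩ B) - P.real A * P.real B := by
  rw [covariance_eq_sub (memLp_two_indicator_one hA) (memLp_two_indicator_one hB),
    ← inter_indicator_one, integral_indicator_one hA, integral_indicator_one hB,
    integral_indicator_one (hA.inter hB)]

lemma variance_sum_indicator_one_le {A : ℕ → Set Ω} (hA : ∀ j, MeasurableSet (A j)) {γ : ℕ → ℝ}
    (hγ : Summable γ)
    (hcov : ∀ i d, |P.real (A i) * P.real (A (i + d)) - P.real (A i ∩ A (i + d))| ≤ γ d)
    (s : Finset ℕ) :
    Var[fun ω => ∑ j ∈ s, (A j).indicator (1 : Ω → ℝ) ω; P] ≤ s.card * (2 * ∑' d, γ d) := by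
  have hle : ∀ i d, cov[(A i).indicator (1 : Ω → ℝ), (A (i + d)).indicator (1 : Ω → ℝ); P] ≤
      γ d := fun i d => by
    rw [covariance_indicator_one (hA _) (hA _)]
    exact (le_abs_self _).trans ((abs_sub_comm _ _).trans_le (hcov i d))
  have hdist : ∀ i j, cov[(A i).indicator (1 : Ω → ℝ), (A j).indicator (1 : Ω → ℝ); P] ≤
      γ (Nat.dist i j) := fun i j => by
    rcases le_total i j with hij | hij
    · simpa only [Nat.add_sub_cancel' hij, Nat.dist_eq_sub_of_le hij] using hle i (j - i)
    · rw [covariance_comm]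
      simpa only [Nat.add_sub_cancel' hij, Nat.dist_eq_sub_of_le_right hij] using hle j (i - j)
  have hγ0 : ∀ d, 0 ≤ γ d := fun d => (abs_nonneg _).trans (hcov 0 d)
  rw [variance_fun_sum' fun j _ => memLp_two_indicator_one (hA j)]
  calc _ ≤ ∑ i ∈ s, ∑ j ∈ s, γ (Nat.dist i j) :=
        Finset.sum_le_sum fun i _ => Finset.sum_le_sum fun j _ => hdist i j
    _ ≤ ∑ _i ∈ s, 2 * ∑' d, γ d :=
        Finset.sum_le_sum fun i _ => sum_dist_le_two_mul_tsum hγ0 hγ s i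
    _ = s.card * (2 * ∑' d, γ d) := by rw [Finset.sum_const, nsmul_eq_mul]

lemma abs_mul_sub_measureReal_inter_le_left (A B : Set Ω) :
    |P.real A * P.real B - P.real (A ∩ B)| ≤ P.real A :=
  abs_sub_le_of_nonneg_of_le (by positivity)
    (mul_le_of_le_one_right measureReal_nonneg measureReal_le_one) measureReal_nonneg
    (measureReal_mono inter_subset_left)

lemma measureReal_card_le_half_mean_le {A : ℕ → Set Ω} (hA : ∀ j, MeasurableSet (A j)) {p : ℝ}
    (hp : 0 < p) (hAp : ∀ j, P.real (A j) = p) {α : ℕ → ℝ}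
    (hα : ∀ i d, |P.real (A i) * P.real (A (i + d)) - P.real (A i ∩ A (i + d))| ≤ α d)
    {θ : ℝ} (hθ0 : 0 ≤ θ) (hθ1 : θ ≤ 1) (hsum : Summable fun d => α d ^ θ)
    {s : Finset ℕ} (hs : s.Nonempty) :
    P.real {ω | ({j ∈ s | ω ∈ A j}.card : ℝ) ≤ s.card * p / 2} ≤
      8 * (∑' d, α d ^ θ) / (s.card * p ^ (1 + θ)) := by
  set S : Ω → ℝ := fun ω => ∑ j ∈ s, (A j).indicator (1 : Ω → ℝ) ω with hS
  have hL2 : ∀ j, MemLp ((A j).indicator (1 : Ω → ℝ)) 2 P := fun j =>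
    memLp_two_indicator_one (hA j)
  have hcard : ∀ ω, ({j ∈ s | ω ∈ A j}.card : ℝ) = S ω := fun ω => by
    simp [hS, Set.indicator_apply]
  have hmean : P[S] = s.card * p := by
    rw [hS, integral_finsetSum _ fun j _ => (hL2 j).integrable one_le_two]
    simp only [integral_indicator_one (hA _), hAp, Finset.sum_const, nsmul_eq_mul]
  have hvar : Var[S; P] ≤ s.card * (2 * (p ^ (1 - θ) * ∑' d, α d ^ θ)) := by
    rw [← tsum_mul_left]
    refine variance_sum_indicator_one_le hA (hsum.mul_left _) (fun i d => ?_) s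
    exact le_rpow_one_sub_mul_rpow (abs_nonneg _)
      (hAp i ▸ abs_mul_sub_measureReal_inter_le_left _ _) (hα i d) hθ0 hθ1
  have hs0 : (0 : ℝ) < s.card := by exact_mod_cast hs.card_pos
  simp only [hcard, ← hmean]
  calc P.real {ω | S ω ≤ P[S] / 2} ≤ 4 * Var[S; P] / P[S] ^ 2 :=
        measureReal_le_half_mean_le (memLp_finsetSum _ fun j _ => hL2 j)
          (hmean ▸ mul_pos hs0 hp)
    _ ≤ 4 * (s.card * (2 * (p ^ (1 - θ) * ∑' d, α d ^ θ))) / (s.card * p) ^ 2 := by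
        rw [hmean]
        gcongr
    _ = 8 * (∑' d, α d ^ θ) / (s.card * p ^ (1 + θ)) := by
        have hp2 : p ^ 2 = p ^ (1 - θ) * p ^ (1 + θ) := by
          rw [← Real.rpow_add hp, ← Real.rpow_natCast]
          norm_num
        rw [mul_pow, hp2]
        field_simp
        ring

lemma ae_eventually_half_mean_lt_card {A : ℕ → ℕ → Set Ω}
    (hA : ∀ n j, MeasurableSet (A n j)) {p : ℕ → ℝ} (hAp : ∀ n j, P.real (A n j) = p n)
    {α : ℕ → ℝ} (hα : ∀ᶠ n in atTop, ∀ i d,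
      |P.real (A n i) * P.real (A n (i + d)) - P.real (A n i ∩ A n (i + d))| ≤ α d)
    (hsum : ∀ θ : ℝ, 0 < θ → Summable fun d => α d ^ θ) {k : ℕ → ℕ} {a c : ℝ} (ha : 0 ≤ a)
    (hac : a < c) (hp : ∀ᶠ n : ℕ in atTop, Real.exp (-a * n) ≤ p n)
    (hk : ∀ᶠ n : ℕ in atTop, Real.exp (c * n) ≤ k n) :
    ∀ᵐ ω ∂P, ∀ᶠ n in atTop,
      (k n : ℝ) * p n / 2 < ({j ∈ Finset.range (k n) | ω ∈ A n j}.card : ℝ) := by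
  -- `θ` is chosen so small that `k n * p n ^ (1 + θ)` still grows exponentially.
  set θ := (c - a) / (1 + c)
  have hθ0 : 0 < θ := div_pos (sub_pos.2 hac) (by linarith)
  have hθ1 : θ ≤ 1 := (div_le_one (by linarith)).2 (by linarith)
  have hε : 0 < c - a * (1 + θ) := by
    have : θ * (1 + c) = c - a := div_mul_cancel₀ _ (by linarith)
    nlinarith
  have hsmall : ∀ᶠ n : ℕ in atTop,
      P.real {ω | ({j ∈ Finset.range (k n) | ω ∈ A n j}.card : ℝ) ≤ k n * p n / 2} ≤
        8 * (∑' d, α d ^ θ) * Real.exp (-(c - a * (1 + θ)) * n) := by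
    filter_upwards [hα, hp, hk] with n hαn hpn hkn
    have hk0 : (Finset.range (k n)).Nonempty := Finset.nonempty_range_iff.2 fun h0 =>
      ((Real.exp_pos _).trans_le hkn).ne' (by exact_mod_cast h0)
    have hα0 : 0 ≤ ∑' d, α d ^ θ :=
      tsum_nonneg fun d => Real.rpow_nonneg ((abs_nonneg _).trans (hαn 0 d)) θ
    have hexp : Real.exp ((c - a * (1 + θ)) * n) ≤ k n * p n ^ (1 + θ) :=
      calc Real.exp ((c - a * (1 + θ)) * n)
          = Real.exp (c * n) * Real.exp (-a * n) ^ (1 + θ) := by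
            rw [← Real.exp_mul, ← Real.exp_add]
            ring_nf
        _ ≤ k n * p n ^ (1 + θ) := by gcongr
    have hcheb := measureReal_card_le_half_mean_le (hA n) ((Real.exp_pos _).trans_le hpn)
      (hAp n) hαn hθ0.le hθ1 (hsum θ hθ0) hk0
    rw [Finset.card_range] at hcheb
    refine hcheb.trans ?_
    rw [neg_mul, Real.exp_neg, ← div_eq_mul_inv]
    gcongr
  filter_upwards [ae_eventually_notMem_of_le_exp hε hsmall] with ω hω
  exact hω.mono fun n hn => not_le.1 hn

end SecondMoment

section Mixing

lemma abs_mul_sub_le_one_div_four {a b c : ℝ} (ha : 0 ≤ a) (hb : 0 ≤ b) (hc : 0 ≤ c)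
    (hca : c ≤ a) (hcb : c ≤ b) (hab : a + b - 1 ≤ c) : |a * b - c| ≤ 1 / 4 := by
  rw [abs_le]
  constructor
  · nlinarith [mul_le_mul hca hcb hc ha, sq_nonneg (c - 1 / 2)]
  · rcases le_total (a + b) 1 <;> nlinarith [sq_nonneg (a - b)]

variable {Ω : Type*}

/-- The `α`-mixing coefficient of two sub-`σ`-algebras. -/
noncomputable def alphaMixing (𝒰 𝒱 : MeasurableSpace Ω) [MeasurableSpace Ω]
    (P : Measure Ω) : ℝ :=
  sSup {r | ∃ A B : Set Ω, MeasurableSet[𝒰] A ∧ MeasurableSet[𝒱] B ∧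
    r = |P.real A * P.real B - P.real (A ∩ B)|}

variable {𝒰 𝒱 𝒱' mΩ : MeasurableSpace Ω} {P : Measure Ω}

lemma alphaMixing_nonneg : 0 ≤ alphaMixing 𝒰 𝒱 P :=
  Real.sSup_nonneg fun _ ⟨_, _, _, _, hr⟩ => hr ▸ abs_nonneg _

variable [IsProbabilityMeasure P]

lemma abs_mul_sub_measureReal_inter_le_one_div_four (A : Set Ω) {B : Set Ω}
    (hB : MeasurableSet B) : |P.real A * P.real B - P.real (A ∩ B)| ≤ 1 / 4 := by
  refine abs_mul_sub_le_one_div_four measureReal_nonneg measureReal_nonneg measureReal_nonneg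
    (measureReal_mono inter_subset_left) (measureReal_mono inter_subset_right) ?_
  have hdiff : P.real (A \ B) ≤ 1 - P.real B :=
    (measureReal_mono (sdiff_subset_compl _ _)).trans_eq (probReal_compl_eq_one_sub hB)
  linarith [measureReal_inter_add_sdiff (μ := P) (s := A) hB]

lemma abs_mul_sub_measureReal_inter_le_alphaMixing {A B : Set Ω}
    (hA : MeasurableSet[𝒰] A) (hB : MeasurableSet[𝒱] B) :
    |P.real A * P.real B - P.real (A ∩ B)| ≤ alphaMixing 𝒰 𝒱 P := by
  refine le_csSup ⟨1, ?_⟩ ⟨A, B, hA, hB, rfl⟩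
  rintro _ ⟨A, B, -, -, rfl⟩
  exact (abs_mul_sub_measureReal_inter_le_left A B).trans measureReal_le_one

lemma alphaMixing_le_one_div_four (h : 𝒱 ≤ mΩ) :
    alphaMixing 𝒰 𝒱 P ≤ 1 / 4 := by
  refine Real.sSup_le ?_ (by norm_num)
  rintro _ ⟨A, B, -, hB, rfl⟩
  exact abs_mul_sub_measureReal_inter_le_one_div_four A (h B hB)

lemma alphaMixing_mono_right (h : 𝒱 ≤ 𝒱') :
    alphaMixing 𝒰 𝒱 P ≤ alphaMixing 𝒰 𝒱' P := by
  refine Real.sSup_le ?_ (alphaMixing_nonneg)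
  rintro _ ⟨A, B, hA, hB, rfl⟩
  exact abs_mul_sub_measureReal_inter_le_alphaMixing hA (h B hB)

end Mixing

section RosenblattCoefficients

variable {Ω E : Type*} [MeasurableSpace E]

/-- The `σ`-algebra generated by the coordinates of the process `X` with index in `s`. -/
abbrev coordSigma (X : Ω → ℕ → E) (s : Set ℕ) : MeasurableSpace Ω :=
  ⨆ k ∈ s, MeasurableSpace.comap (fun ω => X ω k) inferInstance

lemma coordSigma_mono (X : Ω → ℕ → E) {s t : Set ℕ} (h : s ⊆ t) :
    coordSigma X s ≤ coordSigma X t :=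
  biSup_mono fun _ hk => h hk

lemma measurable_coordSigma_apply (X : Ω → ℕ → E) {s : Set ℕ} {k : ℕ} (hk : k ∈ s) :
    Measurable[coordSigma X s] fun ω => X ω k :=
  measurable_iff_comap_le.2
    (le_biSup (fun k => MeasurableSpace.comap (fun ω => X ω k) inferInstance) hk)

variable {mΩ : MeasurableSpace Ω}

lemma coordSigma_le {X : Ω → ℕ → E} (hX : Measurable X) (s : Set ℕ) :
    coordSigma X s ≤ mΩ :=
  iSup₂_le fun k _ => ((measurable_pi_apply k).comp hX).comap_le

/-- The Rosenblatt mixing coefficients of the process `X`, with the convention that the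
coefficient at gap `0` is `1 / 2`. -/
noncomputable def rosenblattCoeff (P : Measure Ω) (X : Ω → ℕ → E) (m : ℕ) : ℝ :=
  if m = 0 then 1 / 2
  else ⨆ i : ℕ, alphaMixing (coordSigma X (Iic i)) (coordSigma X (Ici (i + m))) P

variable {P : Measure Ω} {X : Ω → ℕ → E}

lemma rosenblattCoeff_zero : rosenblattCoeff P X 0 = 1 / 2 :=
  if_pos rfl

lemma rosenblattCoeff_nonneg (m : ℕ) : 0 ≤ rosenblattCoeff P X m := by
  unfold rosenblattCoeff
  split_ifs
  · norm_num
  · exact Real.iSup_nonneg fun _ => alphaMixing_nonneg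

variable [IsProbabilityMeasure P]

lemma alphaMixing_le_rosenblattCoeff (hX : Measurable X) (i m : ℕ) :
    alphaMixing (coordSigma X (Iic i)) (coordSigma X (Ici (i + m))) P ≤ rosenblattCoeff P X m := by
  have hle : ∀ j, alphaMixing (coordSigma X (Iic j)) (coordSigma X (Ici (j + m))) P ≤ 1 / 4 :=
    fun j => alphaMixing_le_one_div_four (coordSigma_le hX _)
  unfold rosenblattCoeff
  split_ifs
  · exact (hle i).trans (by norm_num)
  · exact le_ciSup (f := fun j => alphaMixing (coordSigma X (Iic j)) (coordSigma X (Ici (j + m))) P)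
      ⟨1 / 4, forall_mem_range.2 hle⟩ i

lemma rosenblattCoeff_le_one_div_two (hX : Measurable X) (m : ℕ) :
    rosenblattCoeff P X m ≤ 1 / 2 := by
  unfold rosenblattCoeff
  split_ifs
  · rfl
  · exact Real.iSup_le (fun i => (alphaMixing_le_one_div_four (coordSigma_le hX _)).trans
      (by norm_num)) (by norm_num)

lemma antitone_rosenblattCoeff (hX : Measurable X) : Antitone (rosenblattCoeff P X) := by
  intro m m' hm
  rcases Nat.eq_zero_or_pos m with rfl | hm0
  · exact rosenblattCoeff_le_one_div_two hX m'
  · rw [rosenblattCoeff, if_neg (hm0.trans_le hm).ne']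
    refine Real.iSup_le (fun i => ?_) (rosenblattCoeff_nonneg m)
    exact (alphaMixing_mono_right (coordSigma_mono X (Ici_subset_Ici.2 (by lia)))).trans
      (alphaMixing_le_rosenblattCoeff hX i m)

end RosenblattCoefficients

section GeneralizedInverse

/-- The generalized inverse `u ↦ inf {m | α m ≤ u}` of a sequence `α`, with values in `ℝ≥0∞` so that
the infimum of the empty set is `∞`. -/
noncomputable def genInverse (α : ℕ → ℝ) (u : ℝ) : ℝ≥0∞ :=
  sInf ((fun m : ℕ => (m : ℝ≥0∞)) '' {m | α m ≤ u})

variable {α : ℕ → ℝ}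

lemma natCast_le_genInverse (hα : Antitone α) {m : ℕ} {u : ℝ} (hu : u < α m) :
    (m : ℝ≥0∞) ≤ genInverse α u := by
  refine le_sInf ?_
  rintro _ ⟨m', hm' : α m' ≤ u, rfl⟩
  exact Nat.cast_le.2 (hα.reflect_lt (hm'.trans_lt hu)).le

lemma ofReal_mul_natCast_rpow_le_lintegral_genInverse (hα : Antitone α) {m : ℕ} (hm : α m ≤ 1)
    {h : ℝ} (hh : 0 ≤ h) :
    ENNReal.ofReal (α m) * (m : ℝ≥0∞) ^ h ≤ ∫⁻ u in Ioc (0 : ℝ) 1, genInverse α u ^ h :=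
  calc ENNReal.ofReal (α m) * (m : ℝ≥0∞) ^ h
      = ∫⁻ _ in Ioo (0 : ℝ) (α m), (m : ℝ≥0∞) ^ h := by
        rw [setLIntegral_const, Real.volume_Ioo, sub_zero, mul_comm]
    _ ≤ ∫⁻ u in Ioo (0 : ℝ) (α m), genInverse α u ^ h :=
        setLIntegral_mono' measurableSet_Ioo fun u hu =>
          ENNReal.rpow_le_rpow (natCast_le_genInverse hα hu.2) hh
    _ ≤ ∫⁻ u in Ioc (0 : ℝ) 1, genInverse α u ^ h :=
        lintegral_mono_set (Ioo_subset_Ioc_self.trans (Ioc_subset_Ioc_right hm))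

lemma summable_rpow_of_lintegral_genInverse_lt_top (hα : Antitone α) (hα0 : ∀ m, 0 ≤ α m)
    (hα1 : ∀ m, α m ≤ 1) {θ : ℝ} (hθ : 0 < θ)
    (hint : ∫⁻ u in Ioc (0 : ℝ) 1, genInverse α u ^ (2 / θ) < ⊤) :
    Summable fun m => α m ^ θ := by
  set M := (∫⁻ u in Ioc (0 : ℝ) 1, genInverse α u ^ (2 / θ)).toReal
  have hbound : ∀ m, α m * (m : ℝ) ^ (2 / θ) ≤ M := fun m => by
    simpa only [ENNReal.toReal_mul, ENNReal.toReal_ofReal (hα0 m), ← ENNReal.toReal_rpow,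
      ENNReal.toReal_natCast] using ENNReal.toReal_mono hint.ne
        (ofReal_mul_natCast_rpow_le_lintegral_genInverse hα (hα1 m) (by positivity))
  refine .of_norm_bounded_eventually_nat
    ((Real.summable_one_div_nat_pow.2 one_lt_two).mul_left (M ^ θ)) ?_
  filter_upwards [eventually_gt_atTop 0] with m hm
  rw [Real.norm_of_nonneg (Real.rpow_nonneg (hα0 m) θ), mul_one_div, le_div_iff₀ (by positivity)]
  calc α m ^ θ * (m : ℝ) ^ 2 = (α m * (m : ℝ) ^ (2 / θ)) ^ θ := by
        rw [Real.mul_rpow (hα0 m) (by positivity), ← Real.rpow_mul (Nat.cast_nonneg m),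
          div_mul_cancel₀ _ hθ.ne', Real.rpow_two]
    _ ≤ M ^ θ := Real.rpow_le_rpow (mul_nonneg (hα0 m) (by positivity)) (hbound m) hθ.le

end GeneralizedInverse

section Stationarity

variable {Ω E : Type*} [MeasurableSpace Ω] [MeasurableSpace E] {P : Measure Ω} {X : Ω → ℕ → E}

lemma measurable_shift (hX : Measurable X) (m : ℕ) : Measurable fun ω i => X ω (i + m) :=
  measurable_pi_lambda _ fun i => (measurable_pi_apply (i + m)).comp hX

lemma identDistrib_shift (hX : Measurable X)
    (hstat : P.map (fun ω i => X ω (i + 1)) = P.map X) (m : ℕ) :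
    IdentDistrib (fun ω i => X ω (i + m)) X P P := by
  induction m with
  | zero => exact .refl hX.aemeasurable
  | succ m ih =>
    have hone : IdentDistrib (fun ω i => X ω (i + 1)) X P P :=
      ⟨(measurable_shift hX 1).aemeasurable, hX.aemeasurable, hstat⟩
    exact (hone.comp (measurable_shift measurable_id m)).trans ih

end Stationarity

section BlockEmpirical

variable {Ω E Y : Type*} [MeasurableSpace Y]

/-- The empirical measure of a functional `F` evaluated along the process `X` started at the first
`k` multiples of `n`. -/
noncomputable def blockEmpirical (X : Ω → ℕ → E) (F : (ℕ → E) → Y) (n k : ℕ) (ω : Ω) : Measure Y :=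
  (k : ℝ≥0∞)⁻¹ • ∑ j ∈ Finset.Icc 1 k, Measure.dirac (F fun i => X ω (i + (j - 1) * n))

lemma blockEmpirical_apply (X : Ω → ℕ → E) (F : (ℕ → E) → Y) (n k : ℕ) (ω : Ω) {B : Set Y}
    (hB : MeasurableSet B) :
    blockEmpirical X F n k ω B =
      (k : ℝ≥0∞)⁻¹ * ∑ j ∈ Finset.range k, B.indicator 1 (F fun i => X ω (i + j * n)) := by
  simp only [blockEmpirical, Measure.smul_apply, Measure.finsetSum_apply, smul_eq_mul,
    Measure.dirac_apply' _ hB, ← Finset.Ico_add_one_right_eq_Icc, Finset.sum_Ico_eq_sum_range,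
    add_tsub_cancel_left, add_tsub_cancel_right]

variable [MeasurableSpace Ω] [MeasurableSpace E] {P : Measure Ω} {X : Ω → ℕ → E} {F : (ℕ → E) → Y}

lemma measurable_indicator_block (hX : Measurable X) (hF : Measurable F) (m : ℕ) {B : Set Y}
    (hB : MeasurableSet B) :
    Measurable fun ω => B.indicator (1 : Y → ℝ≥0∞) (F fun i => X ω (i + m)) :=
  (measurable_one.indicator hB).comp (hF.comp (measurable_shift hX m))

lemma measurable_blockEmpirical_apply (hX : Measurable X) (hF : Measurable F) (n k : ℕ) {B : Set Y}
    (hB : MeasurableSet B) : Measurable fun ω => blockEmpirical X F n k ω B := by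
  simp only [blockEmpirical_apply X F n k _ hB]
  exact (Finset.measurable_fun_sum _ fun j _ =>
    measurable_indicator_block hX hF (j * n) hB).const_mul _

lemma lintegral_blockEmpirical_le (hX : Measurable X)
    (hstat : P.map (fun ω i => X ω (i + 1)) = P.map X) (hF : Measurable F) (n k : ℕ) {B : Set Y}
    (hB : MeasurableSet B) :
    ∫⁻ ω, blockEmpirical X F n k ω B ∂P ≤ P.map (fun ω => F (X ω)) B := by
  have hblock (m : ℕ) : ∫⁻ ω, B.indicator (1 : Y → ℝ≥0∞) (F fun i => X ω (i + m)) ∂P =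
      P.map (fun ω => F (X ω)) B := by
    refine Eq.trans ?_ (congrArg (· B) ((identDistrib_shift hX hstat m).comp hF).map_eq)
    rw [← lintegral_indicator_one hB]
    exact (lintegral_map (measurable_one.indicator hB) (hF.comp (measurable_shift hX m))).symm
  have hmeas (m : ℕ) := measurable_indicator_block hX hF m hB
  simp only [blockEmpirical_apply X F n k _ hB]
  rw [lintegral_const_mul _ (Finset.measurable_fun_sum _ fun j _ => hmeas (j * n)),
    lintegral_finsetSum _ fun j _ => hmeas (j * n)]
  simp only [hblock, Finset.sum_const, Finset.card_range, nsmul_eq_mul, ← mul_assoc]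
  exact mul_le_of_le_one_left' (ENNReal.inv_mul_le_one _)

end BlockEmpirical

section BlockMixing

variable {Ω E : Type*} [MeasurableSpace E]

/-- The event that the process `X` started at time `j * n`, the beginning of its `j`-th block of
length `n`, lies in `D`. -/
def blockEvent (X : Ω → ℕ → E) (D : Set (ℕ → E)) (n j : ℕ) : Set Ω :=
  {ω | (fun i => X ω (i + j * n)) ∈ D}

lemma measurableSet_coordSigma_blockEvent (X : Ω → ℕ → E) {D : Set (ℕ → E)} {N n j : ℕ}
    (hD : MeasurableSet[cylinderEvents (Iic N)] D) {s : Set ℕ} (hs : ∀ i ≤ N, i + j * n ∈ s) :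
    MeasurableSet[coordSigma X s] (blockEvent X D n j) :=
  have hblock : Measurable[coordSigma X s, cylinderEvents (Iic N)] fun ω i => X ω (i + j * n) :=
    @measurable_cylinderEvents_iff _ _ _ (coordSigma X s) _ _ _ |>.2 fun i hi =>
      measurable_coordSigma_apply X (hs i hi)
  hblock hD

variable {mΩ : MeasurableSpace Ω} {P : Measure Ω} {X : Ω → ℕ → E}

lemma measurableSet_blockEvent (hX : Measurable X) {D : Set (ℕ → E)} (hD : MeasurableSet D)
    (n j : ℕ) : MeasurableSet (blockEvent X D n j) :=
  measurable_shift hX (j * n) hD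

lemma measureReal_blockEvent (hX : Measurable X)
    (hstat : P.map (fun ω i => X ω (i + 1)) = P.map X) {D : Set (ℕ → E)} (hD : MeasurableSet D)
    (n j : ℕ) : P.real (blockEvent X D n j) = P.real (X ⁻¹' D) :=
  congrArg ENNReal.toReal ((identDistrib_shift hX hstat (j * n)).measure_mem_eq hD)

variable [IsProbabilityMeasure P]

-- For `d < c` the blocks may overlap; then `d - c = 0` and the bound is the trivial `1 / 2`.
lemma abs_mul_sub_measureReal_inter_blockEvent_le (hX : Measurable X) {c n : ℕ} (hn : 0 < n)
    {D : Set (ℕ → E)} (hD : MeasurableSet[cylinderEvents (Iic (c * n))] D) (i d : ℕ) :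
    |P.real (blockEvent X D n i) * P.real (blockEvent X D n (i + d)) -
      P.real (blockEvent X D n i ∩ blockEvent X D n (i + d))| ≤ rosenblattCoeff P X (d - c) := by
  rcases lt_or_ge d c with hd | hd
  · rw [Nat.sub_eq_zero_of_le hd.le, rosenblattCoeff_zero]
    exact (abs_mul_sub_measureReal_inter_le_one_div_four _
      (measurableSet_blockEvent hX (cylinderEvents_le_pi D hD) n (i + d))).trans (by norm_num)
  · refine (abs_mul_sub_measureReal_inter_le_alphaMixing
      (measurableSet_coordSigma_blockEvent X hD fun l hl => mem_Iic.2 ?_)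
      (measurableSet_coordSigma_blockEvent X hD fun l _ => mem_Ici.2 ?_)).trans
      (alphaMixing_le_rosenblattCoeff hX ((i + c) * n) (d - c))
    · nlinarith
    · obtain ⟨e, rfl⟩ := Nat.exists_eq_add_of_le hd
      rw [Nat.add_sub_cancel_left]
      nlinarith

end BlockMixing

section BlockLowerBound

variable {Ω E Y : Type*} [MeasurableSpace Y]

lemma inv_mul_card_le_blockEmpirical {X : Ω → ℕ → E} {F : (ℕ → E) → Y} {D : Set (ℕ → E)}
    {B : Set Y} (hB : MeasurableSet B) (hDB : D ⊆ F ⁻¹' B) (n k : ℕ) (ω : Ω) :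
    (k : ℝ≥0∞)⁻¹ * ({j ∈ Finset.range k | ω ∈ blockEvent X D n j}.card : ℝ≥0∞) ≤
      blockEmpirical X F n k ω B := by
  rw [blockEmpirical_apply X F n k ω hB, Finset.natCast_card_filter]
  gcongr with j
  split_ifs with hω
  · exact (indicator_of_mem (s := B) (hDB hω) 1).ge
  · exact zero_le

variable [MeasurableSpace E] {mΩ : MeasurableSpace Ω} {P : Measure Ω} [IsProbabilityMeasure P]
  {X : Ω → ℕ → E} {c : ℕ} {k : ℕ → ℕ}

lemma summable_rosenblattCoeff_rpow (hX : Measurable X)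
    (hA2 : ∀ h : ℝ, 0 < h → ∫⁻ u in Ioc (0 : ℝ) 1, genInverse (rosenblattCoeff P X) u ^ h < ⊤)
    {θ : ℝ} (hθ : 0 < θ) : Summable fun m => rosenblattCoeff P X m ^ θ :=
  summable_rpow_of_lintegral_genInverse_lt_top (antitone_rosenblattCoeff hX) rosenblattCoeff_nonneg
    (fun m => (rosenblattCoeff_le_one_div_two hX m).trans (by norm_num)) hθ (hA2 _ (by positivity))

lemma ae_eventually_half_mean_lt_card_blockEvent (hX : Measurable X)
    (hstat : P.map (fun ω i => X ω (i + 1)) = P.map X)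
    (hmix : ∀ θ : ℝ, 0 < θ → Summable fun m => rosenblattCoeff P X m ^ θ)
    {D : ℕ → Set (ℕ → E)} (hD : ∀ n, MeasurableSet[cylinderEvents (Iic (c * n))] (D n))
    (hk : -expGrowthInf (fun n => P (X ⁻¹' D n)) < expGrowthInf fun n => (k n : ℝ≥0∞)) :
    ∀ᵐ ω ∂P, ∀ᶠ n in atTop, (k n : ℝ) * P.real (X ⁻¹' D n) / 2 <
      ({j ∈ Finset.range (k n) | ω ∈ blockEvent X (D n) n j}.card : ℝ) := by
  have hDm (n) : MeasurableSet (D n) := cylinderEvents_le_pi _ (hD n)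
  obtain ⟨a, ha, hak⟩ := EReal.lt_iff_exists_real_btwn.1 hk
  obtain ⟨b, hab, hbk⟩ := EReal.lt_iff_exists_real_btwn.1 hak
  have hgrowth_nonpos : expGrowthInf (fun n => P (X ⁻¹' D n)) ≤ 0 :=
    (expGrowthInf_monotone fun n => prob_le_one).trans_eq
      (expGrowthInf_const one_ne_zero ENNReal.one_ne_top)
  have ha0 : 0 ≤ a := EReal.coe_nonneg.1 ((EReal.neg_nonneg.2 hgrowth_nonpos).trans ha.le)
  have hp : ∀ᶠ n : ℕ in atTop, Real.exp (-a * n) ≤ P.real (X ⁻¹' D n) := by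
    filter_upwards [eventually_exp_le (EReal.neg_lt_of_neg_lt ha)] with n hn
    rw [← EReal.coe_neg, exp_coe_mul_natCast] at hn
    exact (ENNReal.ofReal_le_iff_le_toReal (measure_ne_top _ _)).1 hn
  have hkb : ∀ᶠ n : ℕ in atTop, Real.exp (b * n) ≤ k n := by
    filter_upwards [eventually_exp_le hbk] with n hn
    rwa [exp_coe_mul_natCast, ← ENNReal.ofReal_natCast (k n),
      ENNReal.ofReal_le_ofReal_iff (Nat.cast_nonneg _)] at hn
  have hcov : ∀ᶠ n in atTop, ∀ i d, |P.real (blockEvent X (D n) n i) *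
      P.real (blockEvent X (D n) n (i + d)) -
        P.real (blockEvent X (D n) n i ∩ blockEvent X (D n) n (i + d))| ≤
      rosenblattCoeff P X (d - c) :=
    (eventually_gt_atTop 0).mono fun n hn =>
      abs_mul_sub_measureReal_inter_blockEvent_le hX hn (hD n)
  have hsum (θ : ℝ) (hθ : 0 < θ) : Summable fun d => rosenblattCoeff P X (d - c) ^ θ :=
    (summable_nat_add_iff c).1 (by simpa only [Nat.add_sub_cancel] using hmix θ hθ)
  exact ae_eventually_half_mean_lt_card (fun n => measurableSet_blockEvent hX (hDm n) n)
    (fun n => measureReal_blockEvent hX hstat (hDm n) n) hcov hsum ha0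
    (EReal.coe_lt_coe_iff.1 hab) hp hkb

lemma ae_expGrowthInf_le_blockEmpirical_of_subset (hX : Measurable X)
    (hstat : P.map (fun ω i => X ω (i + 1)) = P.map X)
    (hmix : ∀ θ : ℝ, 0 < θ → Summable fun m => rosenblattCoeff P X m ^ θ)
    {F : ℕ → (ℕ → E) → Y} {D : ℕ → Set (ℕ → E)}
    (hD : ∀ n, MeasurableSet[cylinderEvents (Iic (c * n))] (D n))
    {B : Set Y} (hB : MeasurableSet B) (hDB : ∀ᶠ n in atTop, D n ⊆ F n ⁻¹' B)
    (hk : -expGrowthInf (fun n => P (X ⁻¹' D n)) < expGrowthInf fun n => (k n : ℝ≥0∞)) :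
    ∀ᵐ ω ∂P, expGrowthInf (fun n => P (X ⁻¹' D n)) ≤
      expGrowthInf fun n => blockEmpirical X (F n) n (k n) ω B := by
  filter_upwards [ae_eventually_half_mean_lt_card_blockEvent hX hstat hmix hD hk] with ω hω
  refine expGrowthInf_of_eventually_ge (b := 2⁻¹) (by simp) ?_
  filter_upwards [hω, hDB] with n hn hDBn
  have hk0 : k n ≠ 0 := by
    rintro h0
    simp [h0] at hn
  have hcard : (k n : ℝ≥0∞) * (2⁻¹ * P (X ⁻¹' D n)) ≤
      ({j ∈ Finset.range (k n) | ω ∈ blockEvent X (D n) n j}.card : ℝ≥0∞) := by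
    refine (ENNReal.toReal_le_toReal (by finiteness) (by finiteness)).1 ?_
    simp only [ENNReal.toReal_mul, ENNReal.toReal_inv, ENNReal.toReal_natCast,
      ENNReal.toReal_ofNat]
    exact (le_of_eq (by rw [Measure.real]; ring)).trans hn.le
  exact ((ENNReal.mul_le_iff_le_inv (Nat.cast_ne_zero.2 hk0) (ENNReal.natCast_ne_top _)).1
    hcard).trans (inv_mul_card_le_blockEmpirical hB hDBn n (k n) ω)

lemma exists_cylinderEvents_approx {Y : Type*} [PseudoMetricSpace Y] [MeasurableSpace Y]
    [OpensMeasurableSpace Y] {F : ℕ → (ℕ → E) → Y} (hF : ∀ n, Measurable (F n))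
    (hloc : ∀ ε > 0, ∀ᶠ n in atTop, ∀ z z' : ℕ → E,
      (∀ i ≤ c * n, z i = z' i) → dist (F n z) (F n z') < ε)
    (B : Set Y) {δ : ℝ} (hδ : 0 < δ) :
    ∃ D : ℕ → Set (ℕ → E), (∀ n, MeasurableSet[cylinderEvents (Iic (c * n))] (D n)) ∧
      ∀ᶠ n in atTop, F n ⁻¹' B ⊆ D n ∧ D n ⊆ F n ⁻¹' Metric.thickening δ B := by
  set trunc : ℕ → (ℕ → E) → ℕ → E := fun N z i => z (min i N)
  have htrunc (N) : Measurable[cylinderEvents (Iic N), MeasurableSpace.pi] (trunc N) :=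
    @measurable_pi_lambda _ _ _ (cylinderEvents (Iic N)) _ _ fun i =>
      measurable_cylinderEvent_apply (mem_Iic.2 (min_le_right i N))
  have hclose : ∀ᶠ n in atTop, ∀ z, dist (F n z) (F n (trunc (c * n) z)) < δ / 2 :=
    (hloc (δ / 2) (half_pos hδ)).mono fun n hn z =>
      hn z _ fun i hi => congrArg z (min_eq_left hi).symm
  refine ⟨fun n => trunc (c * n) ⁻¹' (F n ⁻¹' Metric.thickening (δ / 2) B), fun n =>
    htrunc _ (hF n Metric.isOpen_thickening.measurableSet), hclose.mono fun n hn => ⟨?_, ?_⟩⟩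
  · exact fun z hz => Metric.mem_thickening_iff.2 ⟨_, hz, dist_comm (F n z) _ ▸ hn z⟩
  · intro z hz
    rw [← add_halves δ]
    exact Metric.thickening_thickening_subset _ _ _ (Metric.mem_thickening_iff.2 ⟨_, hz, hn z⟩)

lemma ae_expGrowthInf_le_blockEmpirical_thickening (hX : Measurable X)
    (hstat : P.map (fun ω i => X ω (i + 1)) = P.map X)
    (hmix : ∀ θ : ℝ, 0 < θ → Summable fun m => rosenblattCoeff P X m ^ θ)
    {Y : Type*} [PseudoMetricSpace Y] [MeasurableSpace Y] [OpensMeasurableSpace Y]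
    {F : ℕ → (ℕ → E) → Y} (hF : ∀ n, Measurable (F n))
    (hloc : ∀ ε > 0, ∀ᶠ n in atTop, ∀ z z' : ℕ → E,
      (∀ i ≤ c * n, z i = z' i) → dist (F n z) (F n z') < ε)
    {B : Set Y} (hB : MeasurableSet B) {δ : ℝ} (hδ : 0 < δ)
    (hk : -expGrowthInf (fun n => P.map (fun ω => F n (X ω)) B) <
      expGrowthInf fun n => (k n : ℝ≥0∞)) :
    ∀ᵐ ω ∂P, expGrowthInf (fun n => P.map (fun ω => F n (X ω)) B) ≤
      expGrowthInf fun n => blockEmpirical X (F n) n (k n) ω (Metric.thickening δ B) := by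
  obtain ⟨D, hD, hBD⟩ := exists_cylinderEvents_approx hF hloc B hδ
  have hgrowth : expGrowthInf (fun n => P.map (fun ω => F n (X ω)) B) ≤
      expGrowthInf fun n => P (X ⁻¹' D n) := by
    refine expGrowthInf_eventually_monotone (hBD.mono fun n hn => ?_)
    exact (Measure.map_apply ((hF n).comp hX) hB).trans_le (measure_mono fun ω hω => hn.1 hω)
  filter_upwards [ae_expGrowthInf_le_blockEmpirical_of_subset hX hstat hmix hD
    Metric.isOpen_thickening.measurableSet (hBD.mono fun n hn => hn.2)
    ((EReal.neg_le_neg_iff.2 hgrowth).trans_lt hk)] with ω hω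
  exact hgrowth.trans hω

end BlockLowerBound

section EmpiricalLDP

variable {Ω E Y : Type*} [MeasurableSpace Ω] {P : Measure Ω} [IsProbabilityMeasure P]
  [MeasurableSpace E] {X : Ω → ℕ → E} [MeasurableSpace Y] {F : ℕ → (ℕ → E) → Y} {k : ℕ → ℕ}
  {I : Y → ℝ≥0∞}

lemma ae_expGrowthSup_blockEmpirical_le (hX : Measurable X)
    (hstat : P.map (fun ω i => X ω (i + 1)) = P.map X) (hF : ∀ n, Measurable (F n)) (k : ℕ → ℕ)
    {B : Set Y} (hB : MeasurableSet B) :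
    ∀ᵐ ω ∂P, expGrowthSup (fun n => blockEmpirical X (F n) n (k n) ω B) ≤
      expGrowthSup fun n => P.map (fun ω => F n (X ω)) B := by
  filter_upwards [ae_expGrowthSup_le_expGrowthSup_lintegral (P := P) fun n =>
    measurable_blockEmpirical_apply hX (hF n) n (k n) hB] with ω hω
  exact hω.trans (expGrowthSup_monotone fun n =>
    lintegral_blockEmpirical_le hX hstat (hF n) n (k n) hB)

lemma ae_exponentiallyTight_blockEmpirical [TopologicalSpace Y] [T2Space Y]
    [OpensMeasurableSpace Y] (hX : Measurable X)
    (hstat : P.map (fun ω i => X ω (i + 1)) = P.map X) (hF : ∀ n, Measurable (F n)) (k : ℕ → ℕ)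
    (ht : ExponentiallyTight fun n => P.map fun ω => F n (X ω)) :
    ∀ᵐ ω ∂P, ExponentiallyTight fun n => blockEmpirical X (F n) n (k n) ω := by
  choose K hK hKα using ht
  have hae : ∀ᵐ ω ∂P, ∀ m : ℕ,
      expGrowthSup (fun n => blockEmpirical X (F n) n (k n) ω (K m)ᶜ) ≤
        expGrowthSup fun n => P.map (fun ω => F n (X ω)) (K m)ᶜ :=
    ae_all_iff.2 fun m =>
      ae_expGrowthSup_blockEmpirical_le hX hstat hF k (hK m).isClosed.measurableSet.compl
  filter_upwards [hae] with ω hω α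
  obtain ⟨m, hm⟩ := exists_nat_ge α
  exact ⟨K m, hK m, (hω m).trans ((hKα m).trans (EReal.coe_le_coe_iff.2 (neg_le_neg hm)))⟩

lemma ae_satisfiesWeakLDP_blockEmpirical [PseudoMetricSpace Y] [SecondCountableTopology Y]
    [OpensMeasurableSpace Y] (hX : Measurable X)
    (hstat : P.map (fun ω i => X ω (i + 1)) = P.map X) (hF : ∀ n, Measurable (F n)) {c : ℕ}
    (hloc : ∀ ε > 0, ∀ᶠ n in atTop, ∀ z z' : ℕ → E,
      (∀ i ≤ c * n, z i = z' i) → dist (F n z) (F n z') < ε)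
    (hI : LowerSemicontinuous I) (hLDP : SatisfiesLDP (fun n => P.map fun ω => F n (X ω)) I)
    (hmix : ∀ θ : ℝ, 0 < θ → Summable fun m => rosenblattCoeff P X m ^ θ)
    (hk : ∀ x, I x ≠ ⊤ → (I x : EReal) < expGrowthInf fun n => (k n : ℝ≥0∞)) :
    ∀ᵐ ω ∂P, SatisfiesWeakLDP (fun n => blockEmpirical X (F n) n (k n) ω) I := by
  have hb := TopologicalSpace.isBasis_countableBasis Y
  have hbm : ∀ B ∈ TopologicalSpace.countableBasis Y, MeasurableSet B := fun B hB =>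
    (hb.isOpen hB).measurableSet
  have hupper : ∀ᵐ ω ∂P, ∀ B ∈ TopologicalSpace.countableBasis Y,
      expGrowthSup (fun n => blockEmpirical X (F n) n (k n) ω B) ≤
        expGrowthSup fun n => P.map (fun ω => F n (X ω)) B :=
    (ae_ball_iff (TopologicalSpace.countable_countableBasis Y)).2 fun B hB =>
      ae_expGrowthSup_blockEmpirical_le hX hstat hF k (hbm B hB)
  have hlower : ∀ᵐ ω ∂P, ∀ B ∈ TopologicalSpace.countableBasis Y,
      -expGrowthInf (fun n => P.map (fun ω => F n (X ω)) B) <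
          expGrowthInf (fun n => (k n : ℝ≥0∞)) → ∀ m : ℕ,
        expGrowthInf (fun n => P.map (fun ω => F n (X ω)) B) ≤ expGrowthInf fun n =>
          blockEmpirical X (F n) n (k n) ω (Metric.thickening (1 / ((m : ℝ) + 1)) B) := by
    refine (ae_ball_iff (TopologicalSpace.countable_countableBasis Y)).2 fun B hB =>
      eventually_imp_distrib_left.2 fun hkB => ae_all_iff.2 fun m => ?_
    exact ae_expGrowthInf_le_blockEmpirical_thickening hX hstat hmix hF hloc (hbm B hB)
      Nat.one_div_pos_of_nat hkB
  filter_upwards [hupper, hlower] with ω hupper hlower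
  exact ⟨hLDP.neg_iInf_interior_le_expGrowthInf hb hk hlower,
    fun K hK => hLDP.expGrowthSup_le_of_isCompact hI hb hupper hK⟩

end EmpiricalLDP

section Hypotheses

lemma eq_rosenblattCoeff {Ω E : Type*} [MeasurableSpace Ω] [MeasurableSpace E] {P : Measure Ω}
    {X : Ω → ℕ → E} {α : ℕ → ℝ} (h0 : α 0 = 1 / 2)
    (h : ∀ m, 1 ≤ m → α m = ⨆ i : ℕ,
      alphaMixing (coordSigma X (Iic i)) (coordSigma X (Ici (i + m))) P) :
    α = rosenblattCoeff P X := by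
  funext m
  rcases Nat.eq_zero_or_pos m with rfl | hm
  · rw [h0, rosenblattCoeff_zero]
  · rw [h m hm, rosenblattCoeff, if_neg hm.ne']

lemma coe_lt_expGrowthInf_natCast {Y : Type*} {I : Y → ℝ≥0∞} {k : ℕ → ℕ} (hk0 : ∀ n, 0 < k n)
    (hk : ((⨆ x ∈ {y | I y ≠ ⊤}, I x : ℝ≥0∞) : EReal) <
        atTop.liminf (fun n => ((Real.log (k n) / n : ℝ) : EReal)) ∨
      Tendsto (fun n => Real.log (k n) / n) atTop atTop) {x : Y} (hx : I x ≠ ⊤) :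
    (I x : EReal) < expGrowthInf fun n => (k n : ℝ≥0∞) := by
  have hlog : expGrowthInf (fun n => (k n : ℝ≥0∞)) =
      atTop.liminf fun n => ((Real.log (k n) / n : ℝ) : EReal) := by
    refine liminf_congr (.of_forall fun n => ?_)
    dsimp only
    rw [← ENNReal.ofReal_natCast (k n), ENNReal.log_ofReal_of_pos (by exact_mod_cast hk0 n),
      EReal.coe_div]
    rfl
  rw [hlog]
  rcases hk with hk | hk
  · exact (EReal.coe_ennreal_le_coe_ennreal_iff.2 (le_iSup₂_of_le x hx le_rfl)).trans_lt hk
  · rw [(EReal.tendsto_coe_nhds_top_iff.2 hk).liminf_eq, lt_top_iff_ne_top]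
    simpa using hx

lemma eventually_dist_inv_smul_lt {E Y : Type*} [NormedAddCommGroup Y] [NormedSpace ℝ Y]
    {S S' : ℕ → (ℕ → E) → Y} {c : ℕ}
    (hS' : ∀ n (z z' : ℕ → E), (∀ i < c * n, z i = z' i) → S' n z = S' n z')
    {δ : ℕ → ℝ} (hδ0 : Tendsto δ atTop (𝓝 0)) (hδ : ∀ n z, ‖S n z - S' n z‖ ≤ n * δ n)
    {ε : ℝ} (hε : 0 < ε) :
    ∀ᶠ n : ℕ in atTop, ∀ z z' : ℕ → E, (∀ i ≤ c * n, z i = z' i) →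
      dist ((n : ℝ)⁻¹ • S n z) ((n : ℝ)⁻¹ • S n z') < ε := by
  filter_upwards [hδ0.eventually_lt_const (half_pos hε), eventually_gt_atTop 0]
    with n hδn hn z z' hz
  have hn0 : (0 : ℝ) < n := Nat.cast_pos.2 hn
  have hdist (z) : dist (S n z) (S' n z) ≤ n * δ n := (dist_eq_norm _ _).trans_le (hδ n z)
  have htri := dist_triangle_right (S n z) (S n z') (S' n z)
  have hz' := hdist z'
  rw [← hS' n z z' fun i hi => hz i hi.le] at hz'
  rw [dist_smul₀, norm_inv, Real.norm_natCast, inv_mul_lt_iff₀ hn0]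
  nlinarith [hdist z]

end Hypotheses

theorem theorem4_general {Ω : Type*} [MeasurableSpace Ω] (P : Measure Ω) [IsProbabilityMeasure P]
    {E : Type*} [MeasurableSpace E] {Y : Type*} [MetricSpace Y] [TopologicalSpace.SeparableSpace Y]
    [MeasurableSpace Y] [OpensMeasurableSpace Y] (X : Ω → ℕ → E) (hX : Measurable X)
    (hstat : P.map (fun ω i => X ω (i + 1)) = P.map X)
    (hmix : ∀ θ : ℝ, 0 < θ → Summable fun m => rosenblattCoeff P X m ^ θ)
    (F : ℕ → (ℕ → E) → Y) (hF : ∀ n, Measurable (F n)) (c : ℕ)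
    (hloc : ∀ ε > 0, ∀ᶠ n in atTop, ∀ z z' : ℕ → E,
      (∀ i ≤ c * n, z i = z' i) → dist (F n z) (F n z') < ε)
    (I : Y → ℝ≥0∞) (hI : LowerSemicontinuous I)
    (hLDP : SatisfiesLDP (fun n => P.map fun ω => F n (X ω)) I) (k : ℕ → ℕ)
    (hk : ∀ x, I x ≠ ⊤ → (I x : EReal) < expGrowthInf fun n => (k n : ℝ≥0∞)) :
    (∀ᵐ ω ∂P, SatisfiesWeakLDP (fun n => blockEmpirical X (F n) n (k n) ω) I) ∧
    (ExponentiallyTight (fun n => P.map fun ω => F n (X ω)) →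
      (∀ a : ℝ≥0∞, a ≠ ⊤ → IsCompact {x | I x ≤ a}) ∧
      ∀ᵐ ω ∂P, SatisfiesLDP (fun n => blockEmpirical X (F n) n (k n) ω) I) := by
  have : SecondCountableTopology Y := UniformSpace.secondCountable_of_separable Y
  have hweak := ae_satisfiesWeakLDP_blockEmpirical hX hstat hF hloc hI hLDP hmix hk
  refine ⟨hweak, fun ht => ⟨fun a ha => hLDP.isCompact_sublevel hI ht ha, ?_⟩⟩
  filter_upwards [hweak, ae_exponentiallyTight_blockEmpirical hX hstat hF k ht] with ω hω htω
  exact hω.satisfiesLDP htω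

/-- **Theorem 4.**
Assume `𝒴` separable and (A1), (A2), (A3).  If either `sup_{x ∈ D_I} I(x) < ∞` and
`liminf (log k(n))/n > sup_{x ∈ D_I} I(x)`, or `(log k(n))/n → ∞`, then almost surely
`(μₙ^ω)` satisfies the weak LDP with rate function `I` (lower bound for all sets, upper
bound for compact sets); and if moreover `(μₙ)` is exponentially tight, then almost surely
`(μₙ^ω)` satisfies the full LDP with good rate function `I`. -/
theorem theorem4
    {Ω : Type*} [MeasurableSpace Ω] (P : Measure Ω) [IsProbabilityMeasure P]
    {E : Type*} [MeasurableSpace E]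
    {𝒴 : Type*} [NormedAddCommGroup 𝒴] [NormedSpace ℝ 𝒴]
    [MeasurableSpace 𝒴] [BorelSpace 𝒴]
    -- the stationary process
    (Xseq : Ω → ℕ → E) (hXmeas : Measurable Xseq)
    (hstat : Measure.map (fun ω => fun i => Xseq ω (i + 1)) P = Measure.map Xseq P)
    -- the functionals SₙΦ
    (SΦ : ℕ → (ℕ → E) → 𝒴) (hSΦmeas : ∀ n, Measurable (SΦ n))
    -- the laws μₙ of SₙΦ(X)/n
    (μ : ℕ → Measure 𝒴)
    (hμ : ∀ n, μ n = Measure.map (fun ω => (n : ℝ)⁻¹ • SΦ n (Xseq ω)) P)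
    -- (A1): LDP with rate function I
    (I : 𝒴 → ℝ≥0∞) (hIlsc : LowerSemicontinuous I)
    (hLDP : ∀ Γ : Set 𝒴,
      -(⨅ x ∈ interior Γ, (I x : EReal)) ≤
          Filter.atTop.liminf (fun n : ℕ => ((n : ℝ)⁻¹ : EReal) * ENNReal.log (μ n Γ)) ∧
        Filter.atTop.limsup (fun n : ℕ => ((n : ℝ)⁻¹ : EReal) * ENNReal.log (μ n Γ)) ≤
          -(⨅ x ∈ closure Γ, (I x : EReal)))
    -- (A2): mixing
    (alphaX : ℕ → ℝ) (halpha0 : alphaX 0 = 1 / 2)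
    (halpha : ∀ m, 1 ≤ m → alphaX m = ⨆ i : ℕ, sSup {r : ℝ | ∃ A B : Set Ω,
      MeasurableSet[⨆ kk ∈ Set.Iic i,
        MeasurableSpace.comap (fun ω => Xseq ω kk) inferInstance] A ∧
      MeasurableSet[⨆ jj ∈ Set.Ici (i + m),
        MeasurableSpace.comap (fun ω => Xseq ω jj) inferInstance] B ∧
      r = |(P A).toReal * (P B).toReal - (P (A ∩ B)).toReal|})
    (αinv : ℝ → ℝ≥0∞)
    (hαinv : ∀ u, αinv u = sInf ((fun m : ℕ => (m : ℝ≥0∞)) '' {m | alphaX m ≤ u}))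
    (hA2 : ∀ h : ℝ, 0 < h → ∫⁻ u in Set.Ioc (0 : ℝ) 1, (αinv u) ^ h ∂volume < ⊤)
    -- (A3): approximation by functions of 2n coordinates
    (SΦapp : ℕ → (ℕ → E) → 𝒴)
    (happdep : ∀ n (z z' : ℕ → E), (∀ i < 2 * n, z i = z' i) → SΦapp n z = SΦapp n z')
    (δ : ℕ → ℝ) (hδ0 : Tendsto δ atTop (nhds 0))
    (hδ : ∀ n z, ‖SΦ n z - SΦapp n z‖ ≤ (n : ℝ) * δ n)
    -- the empirical measures μₙ^ω
    (k : ℕ → ℕ) (hkpos : ∀ n, 0 < k n)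
    (μω : ℕ → Ω → Measure 𝒴)
    (hμω : ∀ n ω, μω n ω = (k n : ℝ≥0∞)⁻¹ •
      ∑ j ∈ Finset.Icc 1 (k n),
        Measure.dirac ((n : ℝ)⁻¹ • SΦ n (fun i => Xseq ω (i + (j - 1) * n))))
    [TopologicalSpace.SeparableSpace 𝒴]
    -- growth condition on k(n)
    (hk : ((⨆ x ∈ {y : 𝒴 | I y ≠ ⊤}, I x) ≠ ⊤ ∧
        ((⨆ x ∈ {y : 𝒴 | I y ≠ ⊤}, I x : ℝ≥0∞) : EReal) <
          Filter.atTop.liminf (fun n => ((Real.log (k n) / n : ℝ) : EReal))) ∨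
      Tendsto (fun n => Real.log (k n) / n) atTop atTop) :
    (∀ᵐ ω ∂P,
      (∀ Γ : Set 𝒴,
        -(⨅ x ∈ interior Γ, (I x : EReal)) ≤
          Filter.atTop.liminf (fun n : ℕ =>
            ((n : ℝ)⁻¹ : EReal) * ENNReal.log (μω n ω Γ))) ∧
      (∀ K : Set 𝒴, IsCompact K →
        Filter.atTop.limsup (fun n : ℕ =>
            ((n : ℝ)⁻¹ : EReal) * ENNReal.log (μω n ω K)) ≤
          -(⨅ x ∈ K, (I x : EReal)))) ∧
    ((∀ α : ℝ, ∃ K : Set 𝒴, IsCompact K ∧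
        Filter.atTop.limsup (fun n : ℕ => ((n : ℝ)⁻¹ : EReal) * ENNReal.log (μ n Kᶜ)) ≤
          ((-α : ℝ) : EReal)) →
      (∀ c : ℝ≥0∞, c ≠ ⊤ → IsCompact {x : 𝒴 | I x ≤ c}) ∧
      ∀ᵐ ω ∂P, ∀ Γ : Set 𝒴,
        -(⨅ x ∈ interior Γ, (I x : EReal)) ≤
            Filter.atTop.liminf (fun n : ℕ =>
              ((n : ℝ)⁻¹ : EReal) * ENNReal.log (μω n ω Γ)) ∧
          Filter.atTop.limsup (fun n : ℕ =>
              ((n : ℝ)⁻¹ : EReal) * ENNReal.log (μω n ω Γ)) ≤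
            -(⨅ x ∈ closure Γ, (I x : EReal))) := by
  obtain rfl : alphaX = rosenblattCoeff P Xseq := eq_rosenblattCoeff halpha0 halpha
  obtain rfl : αinv = genInverse (rosenblattCoeff P Xseq) := funext hαinv
  obtain rfl : μ = _ := funext hμ
  obtain rfl : μω = _ := funext₂ hμω
  simp only [inv_natCast_mul_log] at hLDP ⊢
  exact theorem4_general P Xseq hXmeas hstat (fun _ => summable_rosenblattCoeff_rpow hXmeas hA2)
    (fun n z => (n : ℝ)⁻¹ • SΦ n z) (fun n => (hSΦmeas n).const_smul _) 2
    (fun _ => eventually_dist_inv_smul_lt happdep hδ0 hδ) I hIlsc hLDP k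
    (fun _ => coe_lt_expGrowthInf_natCast hkpos (hk.imp_left And.right))
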